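/- Let 2 ≤ a ≤ b ≤ c be integers and h(p,q,r) = (p + q + r − 1)/min(ap, bq, cr) for positive integer triples (p,q,r). Then there exists a triple of the form (p, q, 1) with p, q positive and gcd(p,q) = 1 attaining the infimum of h over all positive integer triples, i.e., min over positive integer (p,q,r) of h(p,q,r) = min over coprime positive (p,q) of h(p,q,1). -/

import Mathlib

/-- The candidate canonical threshold of the Brieskorn singularity
`x^a + y^b + z^c = 0` computed at the weight vector `(p, q, r)`. -/
noncomputable def brieskornH (a b c p q r : ℕ) : ℝ :=
  ((p : ℝ) + q + r - 1) / min ((a : ℝ) * p) (min ((b : ℝ) * q) ((c : ℝ) * r))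

/-- The set of values of `brieskornH a b c` over all positive integer weight triples. -/
def brieskornVals (a b c : ℕ) : Set ℝ :=
  {x | ∃ p q r : ℕ, 0 < p ∧ 0 < q ∧ 0 < r ∧ x = brieskornH a b c p q r}

/-!
Given weights `(p, q, r)`, put `s = p + q + r - 1`, which is `p + q + k` for `r = k + 1`. If
`x / (x + y) ≥ p / s`, `y / (x + y) ≥ q / s` and `(x + y) * min p q r ≤ s`, then `(x, y, 1)` is at
least as good a weight as `(p, q, r)`: for `a, b ≤ c` the value `M` of `brieskornH a b c p q r`
satisfies `s ≤ M * c * min p q r`, besides `s ≤ M * a * p` and `s ≤ M * b * q`. The first two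
conditions say that the fraction `x / (x + y)` lies in `[p / s, 1 - q / s]`. Descending the
Stern–Brocot tree towards this interval, the first fraction met inside it is the mediant of two
Farey neighbours lying strictly outside on either side, and the unimodularity of these neighbours
yields the third condition. So only coprime weights `(x, y, 1)` matter, and among them the minimum
exists because `brieskornH a b c x y 1 ≥ (x + y) / c`.
-/

/-- The fractions `x₂ / (x₂ + y₂)` and `x₁ / (x₁ + y₁)` are Farey neighbours lying strictly to the
left, respectively strictly to the right, of the interval `[p / s, 1 - q / s]`. Both inequalities
are stated without division or subtraction. -/
structure IsFareyBracket (p q s x₁ y₁ x₂ y₂ : ℕ) : Prop where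
  det : x₁ * y₂ = x₂ * y₁ + 1
  right : y₁ * s < q * (x₁ + y₁)
  left : x₂ * s < p * (x₂ + y₂)

namespace IsFareyBracket

variable {p q s k m x₁ y₁ x₂ y₂ : ℕ}

theorem one_zero_zero_one (hp : 0 < p) (hq : 0 < q) : IsFareyBracket p q s 1 0 0 1 where
  det := rfl
  right := by simpa using hq
  left := by simpa using hp

theorem swap (h : IsFareyBracket p q s x₁ y₁ x₂ y₂) : IsFareyBracket q p s y₂ x₂ y₁ x₁ where
  det := by linarith [h.det]
  right := by linarith [h.left]
  left := by linarith [h.right]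

theorem y₂_pos (h : IsFareyBracket p q s x₁ y₁ x₂ y₂) : 0 < y₂ :=
  Nat.pos_of_ne_zero fun hy ↦ by simpa [hy] using h.det

theorem x₁_pos (h : IsFareyBracket p q s x₁ y₁ x₂ y₂) : 0 < x₁ :=
  h.swap.y₂_pos

theorem coprime_mediant (h : IsFareyBracket p q s x₁ y₁ x₂ y₂) :
    Nat.Coprime (x₁ + x₂) (y₁ + y₂) := by
  rw [← Nat.isCoprime_iff_coprime]
  have det : (x₁ : ℤ) * y₂ = x₂ * y₁ + 1 := by exact_mod_cast h.det
  exact ⟨y₂, -x₂, by push_cast; linarith⟩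

theorem mul_size_eq (h : IsFareyBracket p q s x₁ y₁ x₂ y₂) :
    (x₁ + y₁) * (x₂ + y₂) = 1 + (x₁ + y₁) * x₂ + (x₂ + y₂) * y₁ := by
  linarith [h.det]

theorem size_add_le (h : IsFareyBracket p q (p + q + k) x₁ y₁ x₂ y₂) :
    (x₁ + y₁) + (x₂ + y₂) + k * ((x₁ + y₁) * (x₂ + y₂)) ≤ p + q + k := by
  have right_gap := Nat.mul_le_mul_left (x₂ + y₂) (Nat.succ_le_of_lt h.right)
  have left_gap := Nat.mul_le_mul_left (x₁ + y₁) (Nat.succ_le_of_lt h.left)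
  have scaled_size : (x₁ + y₁) * (x₂ + y₂) * (p + q + k) =
      (1 + (x₁ + y₁) * x₂ + (x₂ + y₂) * y₁) * (p + q + k) := by rw [h.mul_size_eq]
  linarith

theorem mediant_size_mul_le_of_right_size_eq_one
    (h : IsFareyBracket p q (p + q + k) x₁ y₁ x₂ y₂) (hv : x₁ + y₁ = 1)
    (hmq : m ≤ q) (hmk : m ≤ k + 1) :
    (x₁ + y₁ + (x₂ + y₂)) * m ≤ p + q + k := by
  rcases m.eq_zero_or_pos with rfl | hm
  · simp
  have hx : x₁ = 1 := by have := h.x₁_pos; lia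
  have hy : y₁ = 0 := by lia
  have hy₂ : y₂ = 1 := by simpa [hx, hy] using h.det
  have hleft := h.left
  subst hx hy hy₂
  have size_lt : (q + k) * (x₂ + 1) < p + q + k := by linarith
  have two_mul_le : 2 * m ≤ q + k + 1 := by lia
  nlinarith [Nat.mul_le_mul_right (x₂ + 1) two_mul_le, Nat.mul_le_mul_left x₂ hm, size_lt]

theorem mediant_size_mul_le (h : IsFareyBracket p q (p + q + k) x₁ y₁ x₂ y₂)
    (hmp : m ≤ p) (hmq : m ≤ q) (hmk : m ≤ k + 1) :
    (x₁ + y₁ + (x₂ + y₂)) * m ≤ p + q + k := by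
  have hv₁ : 1 ≤ x₁ + y₁ := by have := h.x₁_pos; lia
  have hv₂ : 1 ≤ x₂ + y₂ := by have := h.y₂_pos; lia
  rcases hv₁.eq_or_lt with hv₁ | hv₁
  · exact h.mediant_size_mul_le_of_right_size_eq_one hv₁.symm hmq hmk
  rcases hv₂.eq_or_lt with hv₂ | hv₂
  · have h' : IsFareyBracket q p (q + p + k) y₂ x₂ y₁ x₁ := by
      simpa only [add_comm q p] using h.swap
    linarith [h'.mediant_size_mul_le_of_right_size_eq_one (by lia) hmp hmk]
  · calc (x₁ + y₁ + (x₂ + y₂)) * m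
        ≤ (x₁ + y₁ + (x₂ + y₂)) * (k + 1) := by gcongr
      _ = x₁ + y₁ + (x₂ + y₂) + k * (x₁ + y₁ + (x₂ + y₂)) := by ring
      _ ≤ x₁ + y₁ + (x₂ + y₂) + k * ((x₁ + y₁) * (x₂ + y₂)) := by
        gcongr
        exact Nat.add_le_mul hv₁ hv₂
      _ ≤ p + q + k := h.size_add_le

theorem exists_mediant_mem {x₁ y₁ x₂ y₂ : ℕ}
    (h : IsFareyBracket p q (p + q + k) x₁ y₁ x₂ y₂) :
    ∃ x₁ y₁ x₂ y₂, IsFareyBracket p q (p + q + k) x₁ y₁ x₂ y₂ ∧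
      p * (x₁ + y₁ + (x₂ + y₂)) ≤ (x₁ + x₂) * (p + q + k) ∧
      q * (x₁ + y₁ + (x₂ + y₂)) ≤ (y₁ + y₂) * (p + q + k) := by
  by_cases hp : p * (x₁ + y₁ + (x₂ + y₂)) ≤ (x₁ + x₂) * (p + q + k)
  · by_cases hq : q * (x₁ + y₁ + (x₂ + y₂)) ≤ (y₁ + y₂) * (p + q + k)
    · exact ⟨x₁, y₁, x₂, y₂, h, hp, hq⟩
    · have h' : IsFareyBracket p q (p + q + k) (x₁ + x₂) (y₁ + y₂) x₂ y₂ :=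
        ⟨by linarith [h.det], by linarith, h.left⟩
      exact h'.exists_mediant_mem
  · have h' : IsFareyBracket p q (p + q + k) x₁ y₁ (x₁ + x₂) (y₁ + y₂) :=
      ⟨by linarith [h.det], h.right, by linarith⟩
    exact h'.exists_mediant_mem
termination_by p + q + k + 1 - (x₁ + y₁ + (x₂ + y₂))
decreasing_by
  all_goals grind [h.x₁_pos, h.y₂_pos, (Nat.le_add_right ..).trans h.size_add_le]

end IsFareyBracket

theorem exists_coprime_mul_add_le {p q : ℕ} (hp : 0 < p) (hq : 0 < q) (k : ℕ) :
    ∃ x y : ℕ, 0 < x ∧ 0 < y ∧ Nat.Coprime x y ∧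
      p * (x + y) ≤ x * (p + q + k) ∧ q * (x + y) ≤ y * (p + q + k) ∧
      (x + y) * min p (min q (k + 1)) ≤ p + q + k := by
  obtain ⟨x₁, y₁, x₂, y₂, h, hpx, hqy⟩ :=
    (IsFareyBracket.one_zero_zero_one (s := p + q + k) hp hq).exists_mediant_mem
  have size_eq : x₁ + x₂ + (y₁ + y₂) = x₁ + y₁ + (x₂ + y₂) := add_add_add_comm ..
  refine ⟨x₁ + x₂, y₁ + y₂, Nat.add_pos_left h.x₁_pos _, Nat.add_pos_right _ h.y₂_pos,
    h.coprime_mediant, ?_, ?_, ?_⟩ <;> rw [size_eq]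
  · exact hpx
  · exact hqy
  · exact h.mediant_size_mul_le (by simp) (by simp) (by simp)

section brieskornH

variable {a b c p q r x y : ℕ}

theorem brieskornH_denom_pos (ha : 0 < a) (hb : 0 < b) (hc : 0 < c)
    (hp : 0 < p) (hq : 0 < q) (hr : 0 < r) :
    0 < min ((a : ℝ) * p) (min ((b : ℝ) * q) ((c : ℝ) * r)) := by
  refine lt_min ?_ (lt_min ?_ ?_) <;> positivity

theorem brieskornH_nonneg (hp : 0 < p) : 0 ≤ brieskornH a b c p q r := by
  have hp : (1 : ℝ) ≤ p := by exact_mod_cast hp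
  have num_nonneg : (0 : ℝ) ≤ p + q + r - 1 := by
    linarith [q.cast_nonneg (α := ℝ), r.cast_nonneg (α := ℝ)]
  exact div_nonneg num_nonneg (by positivity)

theorem brieskornH_le_iff (ha : 0 < a) (hb : 0 < b) (hc : 0 < c)
    (hp : 0 < p) (hq : 0 < q) (hr : 0 < r) {M : ℝ} (hM : 0 ≤ M) :
    brieskornH a b c p q r ≤ M ↔ (p + q + r - 1 : ℝ) ≤ M * (a * p) ∧
      (p + q + r - 1 : ℝ) ≤ M * (b * q) ∧ (p + q + r - 1 : ℝ) ≤ M * (c * r) := by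
  rw [brieskornH, div_le_iff₀ (brieskornH_denom_pos ha hb hc hp hq hr),
    mul_min_of_nonneg _ _ hM, mul_min_of_nonneg _ _ hM, le_min_iff, le_min_iff]

theorem brieskornH_one_le_of_mul_add_le (ha : 0 < a) (hb : 0 < b) (hac : a ≤ c) (hbc : b ≤ c)
    (hp : 0 < p) (hq : 0 < q) {k : ℕ} (hx : 0 < x) (hy : 0 < y)
    (hpx : p * (x + y) ≤ x * (p + q + k)) (hqy : q * (x + y) ≤ y * (p + q + k))
    (hmin : (x + y) * min p (min q (k + 1)) ≤ p + q + k) :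
    brieskornH a b c x y 1 ≤ brieskornH a b c p q (k + 1) := by
  have hc : 0 < c := ha.trans_le hac
  set M := brieskornH a b c p q (k + 1) with hMdef
  have hM : 0 ≤ M := brieskornH_nonneg hp
  obtain ⟨sum_le_p, sum_le_q, sum_le_r⟩ :=
    (brieskornH_le_iff ha hb hc hp hq k.succ_pos hM).mp hMdef.ge
  have num_eq : (p + q + (k + 1 : ℕ) - 1 : ℝ) = p + q + k := by push_cast; ring
  rw [num_eq] at sum_le_p sum_le_q sum_le_r
  have num_one_eq : (x + y + (1 : ℕ) - 1 : ℝ) = x + y := by push_cast; ring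
  rw [brieskornH_le_iff ha hb hc hx hy one_pos hM, num_one_eq]
  refine ⟨?_, ?_, ?_⟩
  · refine le_of_mul_le_mul_left ?_ (Nat.cast_pos (α := ℝ).mpr hp)
    calc (p * (x + y) : ℝ) ≤ x * (p + q + k) := by exact_mod_cast hpx
      _ ≤ x * (M * (a * p)) := by gcongr
      _ = p * (M * (a * x)) := by ring
  · refine le_of_mul_le_mul_left ?_ (Nat.cast_pos (α := ℝ).mpr hq)
    calc (q * (x + y) : ℝ) ≤ y * (p + q + k) := by exact_mod_cast hqy
      _ ≤ y * (M * (b * q)) := by gcongr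
      _ = q * (M * (b * y)) := by ring
  · have min_pos : 0 < min p (min q (k + 1)) := by simp [hp, hq]
    refine le_of_mul_le_mul_right ?_ (Nat.cast_pos (α := ℝ).mpr min_pos)
    calc ((x + y) * (min p (min q (k + 1)) : ℕ) : ℝ) ≤ p + q + k := by exact_mod_cast hmin
      _ ≤ min (M * (c * p)) (min (M * (c * q)) (M * (c * (k + 1 : ℕ)))) :=
        le_min (sum_le_p.trans (by gcongr)) (le_min (sum_le_q.trans (by gcongr)) sum_le_r)
      _ = M * (c * (1 : ℕ)) * (min p (min q (k + 1)) : ℕ) := by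
        have hMc : 0 ≤ M * c := by positivity
        simp only [← mul_assoc, ← mul_min_of_nonneg _ _ hMc, Nat.cast_min, Nat.cast_one, mul_one]

theorem exists_coprime_brieskornH_one_le (ha : 0 < a) (hb : 0 < b) (hac : a ≤ c) (hbc : b ≤ c)
    (hp : 0 < p) (hq : 0 < q) (hr : 0 < r) :
    ∃ x y : ℕ, 0 < x ∧ 0 < y ∧ Nat.Coprime x y ∧
      brieskornH a b c x y 1 ≤ brieskornH a b c p q r := by
  obtain ⟨k, rfl⟩ := Nat.exists_eq_add_one.mpr hr
  obtain ⟨x, y, hx, hy, hxy, hpx, hqy, hmin⟩ := exists_coprime_mul_add_le hp hq k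
  exact ⟨x, y, hx, hy, hxy, brieskornH_one_le_of_mul_add_le ha hb hac hbc hp hq hx hy hpx hqy hmin⟩

theorem add_le_mul_brieskornH_one (ha : 0 < a) (hb : 0 < b) (hc : 0 < c)
    (hp : 0 < p) (hq : 0 < q) : (p + q : ℝ) ≤ c * brieskornH a b c p q 1 := by
  have h := ((brieskornH_le_iff ha hb hc hp hq one_pos (brieskornH_nonneg hp)).mp le_rfl).2.2
  push_cast at h
  linarith

theorem finite_setOf_brieskornH_one_le (ha : 0 < a) (hb : 0 < b) (hc : 0 < c) (M : ℝ) :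
    {x : ℕ × ℕ | 0 < x.1 ∧ 0 < x.2 ∧ brieskornH a b c x.1 x.2 1 ≤ M}.Finite := by
  refine (Set.finite_Iic (⌊c * M⌋₊, ⌊c * M⌋₊)).subset ?_
  rintro ⟨p, q⟩ ⟨hp, hq, hM⟩
  have hsum : (p + q : ℝ) ≤ c * M :=
    (add_le_mul_brieskornH_one ha hb hc hp hq).trans (by gcongr)
  exact ⟨Nat.le_floor ((le_add_of_nonneg_right q.cast_nonneg).trans hsum),
    Nat.le_floor ((le_add_of_nonneg_left p.cast_nonneg).trans hsum)⟩

theorem exists_coprime_forall_brieskornH_one_le (ha : 0 < a) (hb : 0 < b) (hc : 0 < c) :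
    ∃ p q : ℕ, 0 < p ∧ 0 < q ∧ Nat.Coprime p q ∧ ∀ x y : ℕ, 0 < x → 0 < y → Nat.Coprime x y →
      brieskornH a b c p q 1 ≤ brieskornH a b c x y 1 := by
  let sublevel : Set (ℕ × ℕ) := {x | 0 < x.1 ∧ 0 < x.2 ∧ Nat.Coprime x.1 x.2 ∧
    brieskornH a b c x.1 x.2 1 ≤ brieskornH a b c 1 1 1}
  have hfin : sublevel.Finite := (finite_setOf_brieskornH_one_le ha hb hc _).subset
    fun _ hx ↦ ⟨hx.1, hx.2.1, hx.2.2.2⟩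
  obtain ⟨⟨p, q⟩, ⟨hp, hq, hpq, hle⟩, hmin⟩ := Set.exists_min_image sublevel
    (fun x ↦ brieskornH a b c x.1 x.2 1) hfin ⟨(1, 1), by simp [sublevel]⟩
  refine ⟨p, q, hp, hq, hpq, fun x y hx hy hxy ↦ ?_⟩
  rcases le_total (brieskornH a b c x y 1) (brieskornH a b c 1 1 1) with hxy1 | hxy1
  · exact hmin (x, y) ⟨hx, hy, hxy, hxy1⟩
  · exact hle.trans hxy1

end brieskornH

theorem brieskorn_min_weight_r_eq_one_general (a b c : ℕ) (ha : 0 < a) (hb : 0 < b)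
    (hac : a ≤ c) (hbc : b ≤ c) :
    ∃ p q : ℕ, 0 < p ∧ 0 < q ∧ Nat.Coprime p q ∧
      IsLeast (brieskornVals a b c) (brieskornH a b c p q 1) := by
  obtain ⟨p, q, hp, hq, hpq, hmin⟩ :=
    exists_coprime_forall_brieskornH_one_le ha hb (ha.trans_le hac)
  refine ⟨p, q, hp, hq, hpq, ⟨p, q, 1, hp, hq, one_pos, rfl⟩, ?_⟩
  rintro _ ⟨p', q', r', hp', hq', hr', rfl⟩
  obtain ⟨x, y, hx, hy, hxy, hle⟩ := exists_coprime_brieskornH_one_le ha hb hac hbc hp' hq' hr'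
  exact (hmin x y hx hy hxy).trans hle

/-- The minimum of `brieskornH` over all positive integer weight triples can be
attained at a triple of the form `(p, q, 1)` with `p`, `q` coprime. -/
theorem brieskorn_min_weight_r_eq_one (a b c : ℕ) (ha : 2 ≤ a) (hab : a ≤ b) (hbc : b ≤ c) :
    ∃ p q : ℕ, 0 < p ∧ 0 < q ∧ Nat.Coprime p q ∧
      IsLeast (brieskornVals a b c) (brieskornH a b c p q 1) := by
  exact brieskorn_min_weight_r_eq_one_general a b c (by lia) (by lia) (hab.trans hbc) hbc
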